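/- Let Q_ρ(z₀) = B_ρ(x₀) × (t₀−ρ^p, t₀+ρ^p) ⊂ ℝ^{n+1}, let u ∈ L¹(Q_ρ(z₀)) and F ∈ L¹(Q_ρ(z₀), ℝ^n) satisfy ∂_t u = div F in the distributional sense in Q_ρ(z₀). Then there exists a radius ρ̂ ∈ (ρ/2, ρ) such that for a.e. t₁, t₂ ∈ (t₀−ρ^p, t₀+ρ^p) one has |(u)_{x₀,ρ̂}(t₂) − (u)_{x₀,ρ̂}(t₁)| ≤ 2^{n+2} ρ^{p−1} ⨍⨍_{Q_ρ(z₀)} |F| dx dt, where (u)_{x₀,r}(t) denotes the mean value of u(·,t) over B_r(x₀). -/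

import Mathlib

open MeasureTheory Set Metric
open scoped ENNReal

noncomputable section

/-- Smooth test functions compactly supported in the space-time cylinder `I ×ˢ Ω`. -/
def IsTestFun {n : ℕ} (Ω : Set (EuclideanSpace ℝ (Fin n))) (I : Set ℝ)
    (φ : ℝ → EuclideanSpace ℝ (Fin n) → ℝ) : Prop :=
  ContDiff ℝ (⊤ : ℕ∞) (fun q : ℝ × EuclideanSpace ℝ (Fin n) => φ q.1 q.2) ∧
  HasCompactSupport (fun q : ℝ × EuclideanSpace ℝ (Fin n) => φ q.1 q.2) ∧
  tsupport (fun q : ℝ × EuclideanSpace ℝ (Fin n) => φ q.1 q.2) ⊆ I ×ˢ Ω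

open Filter Topology
open scoped ContDiff

/-- The primitive of a normalized one-dimensional bump function: a smooth monotone step from
`0` to `1`. -/
def bumpStep (ψ : ContDiffBump (0 : ℝ)) (s : ℝ) : ℝ :=
  ∫ v in (-ψ.rOut)..s, ψ.normed volume v

lemma hasDerivAt_bumpStep (ψ : ContDiffBump (0 : ℝ)) (s : ℝ) :
    HasDerivAt (bumpStep ψ) (ψ.normed volume s) s :=
  ψ.continuous_normed.integral_hasStrictDerivAt _ _ |>.hasDerivAt

lemma contDiff_bumpStep (ψ : ContDiffBump (0 : ℝ)) : ContDiff ℝ ∞ (bumpStep ψ) := by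
  rw [contDiff_infty_iff_deriv]
  refine ⟨fun s => (hasDerivAt_bumpStep ψ s).differentiableAt, ?_⟩
  rw [show deriv (bumpStep ψ) = ψ.normed volume from
    funext fun s => (hasDerivAt_bumpStep ψ s).deriv]
  exact ψ.contDiff_normed

lemma bumpStep_eq_zero (ψ : ContDiffBump (0 : ℝ)) {s : ℝ} (hs : s ≤ -ψ.rOut) :
    bumpStep ψ s = 0 := by
  unfold bumpStep
  rw [intervalIntegral.integral_symm, intervalIntegral.integral_of_le hs, neg_eq_zero]
  refine integral_eq_zero_of_ae ?_
  refine (ae_restrict_iff' measurableSet_Ioc).2 (ae_of_all _ fun v hv => ?_)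
  have : v ∉ Function.support (ψ.normed volume) := by
    rw [ψ.support_normed_eq, mem_ball_zero_iff, Real.norm_eq_abs, abs_lt]
    rintro ⟨h1, -⟩
    linarith [hv.2]
  simpa using this

lemma bumpStep_eq_one (ψ : ContDiffBump (0 : ℝ)) {s : ℝ} (hs : ψ.rOut ≤ s) :
    bumpStep ψ s = 1 := by
  unfold bumpStep
  have h0 := ψ.rOut_pos
  rw [intervalIntegral.integral_of_le (by linarith), ← ψ.integral_normed (μ := volume)]
  refine setIntegral_eq_integral_of_forall_compl_eq_zero fun v hv => ?_
  have : v ∉ Function.support (ψ.normed volume) := by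
    rw [ψ.support_normed_eq, mem_ball_zero_iff, Real.norm_eq_abs, abs_lt]
    rintro ⟨h1, h2⟩
    exact hv ⟨h1, by linarith⟩
  simpa using this

lemma monotone_bumpStep (ψ : ContDiffBump (0 : ℝ)) : Monotone (bumpStep ψ) :=
  monotone_of_deriv_nonneg (fun s => (hasDerivAt_bumpStep ψ s).differentiableAt) fun s => by
    rw [(hasDerivAt_bumpStep ψ s).deriv]
    exact ψ.nonneg_normed s

lemma bumpStep_mem_Icc (ψ : ContDiffBump (0 : ℝ)) (s : ℝ) : bumpStep ψ s ∈ Icc (0 : ℝ) 1 := by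
  constructor
  · rw [← bumpStep_eq_zero ψ (min_le_right s (-ψ.rOut))]
    exact monotone_bumpStep ψ (min_le_left _ _)
  · rw [← bumpStep_eq_one ψ (le_max_right s ψ.rOut)]
    exact monotone_bumpStep ψ (le_max_left _ _)

lemma lipschitzWith_bumpStep (ψ : ContDiffBump (0 : ℝ)) {c : ℝ}
    (hψ : ψ.rOut ≤ c * ψ.rIn) :
    LipschitzWith (c / (2 * ψ.rOut)).toNNReal (bumpStep ψ) := by
  refine lipschitzWith_of_nnnorm_deriv_le
    (fun s => (hasDerivAt_bumpStep ψ s).differentiableAt) fun s => ?_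
  rw [(hasDerivAt_bumpStep ψ s).deriv, ← Real.toNNReal_coe (r := ‖ψ.normed volume s‖₊),
    coe_nnnorm, Real.norm_of_nonneg (ψ.nonneg_normed s)]
  refine Real.toNNReal_le_toNNReal ?_
  refine (ψ.normed_le_div_measure_closedBall_rOut volume c hψ s).trans_eq ?_
  simp [measureReal_def, Real.volume_closedBall, ENNReal.toReal_ofReal ψ.rOut_pos.le]

section Cutoff

variable {E : Type*} [NormedAddCommGroup E] [InnerProductSpace ℝ E]

/-- Smooth radial cutoff functions between concentric balls, with a gradient bound as close as
desired to the optimal one. -/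
lemma exists_radial_cutoff (x₀ : E) {a b c : ℝ} (ha : 0 < a) (hab : a < b) (hc : 1 < c) :
    ∃ ζ : E → ℝ, ContDiff ℝ ∞ ζ ∧ (∀ x, ζ x ∈ Icc (0 : ℝ) 1) ∧
      (∀ x, dist x x₀ ≤ a → ζ x = 1) ∧ (∀ x, b ≤ dist x x₀ → ζ x = 0) ∧
      ∀ x, ‖fderiv ℝ ζ x‖ ≤ (ball x₀ b \ ball x₀ a).indicator (fun _ => c / (b - a)) x := by
  have hba : 0 < b - a := sub_pos.2 hab
  let ψ : ContDiffBump (0 : ℝ) :=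
    ⟨(b - a) / 2 / c, (b - a) / 2, by positivity, div_lt_self (by positivity) hc⟩
  have hψ : ψ.rOut = (b - a) / 2 := rfl
  set ζ : E → ℝ := fun x => bumpStep ψ ((a + b) / 2 - dist x x₀) with hζ
  have h1 : ∀ x, dist x x₀ ≤ a → ζ x = 1 := fun x hx =>
    bumpStep_eq_one ψ (by rw [hψ]; linarith)
  have h0 : ∀ x, b ≤ dist x x₀ → ζ x = 0 := fun x hx =>
    bumpStep_eq_zero ψ (by rw [hψ]; linarith)
  have hI : ∀ x, ζ x ∈ Icc (0 : ℝ) 1 := fun x => bumpStep_mem_Icc ψ _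
  refine ⟨ζ, ?_, hI, h1, h0, fun x => ?_⟩
  · rw [contDiff_iff_contDiffAt]
    intro x
    by_cases hx : x = x₀
    · have : ζ =ᶠ[𝓝 x] fun _ => 1 := by
        filter_upwards [ball_mem_nhds x ha] with y hy
        exact h1 y (by rw [hx] at hy; exact (mem_ball.1 hy).le)
      exact contDiffAt_const.congr_of_eventuallyEq this
    · refine (contDiff_bumpStep ψ).contDiffAt.comp x (contDiffAt_const.sub ?_)
      exact contDiffAt_id.dist ℝ contDiffAt_const hx
  · by_cases hxa : dist x x₀ < a
    · have : IsLocalMax ζ x := Eventually.of_forall fun y => by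
        rw [h1 x hxa.le]; exact (hI y).2
      rw [this.fderiv_eq_zero, norm_zero]
      exact indicator_nonneg (fun _ _ => by positivity) _
    by_cases hxb : b ≤ dist x x₀
    · have : IsLocalMin ζ x := Eventually.of_forall fun y => by
        rw [h0 x hxb]; exact (hI y).1
      rw [this.fderiv_eq_zero, norm_zero]
      exact indicator_nonneg (fun _ _ => by positivity) _
    rw [indicator_of_mem (show x ∈ ball x₀ b \ ball x₀ a from ⟨not_le.1 hxb, hxa⟩)]
    have hL : LipschitzWith (c / (b - a)).toNNReal ζ := by
      have hs : LipschitzWith (c / (2 * ψ.rOut)).toNNReal (bumpStep ψ) :=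
        lipschitzWith_bumpStep ψ (le_of_eq (by
          change (b - a) / 2 = c * ((b - a) / 2 / c); field_simp))
      have hd : LipschitzWith 1 fun x : E => (a + b) / 2 - dist x x₀ := by
        refine LipschitzWith.of_dist_le_mul fun y z => ?_
        rw [Real.dist_eq, NNReal.coe_one, one_mul, sub_sub_sub_cancel_left, abs_sub_comm]
        exact abs_dist_sub_le y z x₀
      have := hs.comp hd
      rwa [mul_one, hψ, mul_div_cancel₀ _ (two_ne_zero' ℝ)] at this
    have := norm_fderiv_le_of_lipschitz ℝ (x₀ := x) hL
    rwa [Real.coe_toNNReal _ (by positivity)] at this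

end Cutoff

/-- A continuous function has an interior point near which it has, on one side, difference
quotients bounded by the mean slope. -/
lemma exists_slope_le_mean {G : ℝ → ℝ} {α β : ℝ} (hαβ : α < β)
    (hG : ContinuousOn G (Icc α β)) :
    ∃ r ∈ Ioo α β, ∃ a b : ℕ → ℝ, (∀ k, α < a k ∧ a k < b k ∧ b k < β ∧
        G (b k) - G (a k) ≤ (G β - G α) / (β - α) * (b k - a k)) ∧
      (∀ k, a k ≤ r ∧ r ≤ b k) ∧ Tendsto a atTop (𝓝 r) ∧ Tendsto b atTop (𝓝 r) := by
  set M := (G β - G α) / (β - α) with hM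
  have hMe : M * (β - α) = G β - G α := by
    rw [hM]; field_simp [(sub_pos.2 hαβ).ne']
  obtain ⟨r, hr, hext⟩ := exists_isLocalExtr_Ioo (f := fun s => G s - M * s) hαβ
    (hG.sub (by fun_prop)) (by linarith)
  have hlim : Tendsto (fun k : ℕ => (1 : ℝ) / ((k : ℝ) + 1)) atTop (𝓝 0) :=
    tendsto_one_div_add_atTop_nhds_zero_nat
  refine ⟨r, hr, ?_⟩
  rcases hext with hmin | hmax
  · have hev : ∀ᶠ s in 𝓝 r, G r - M * r ≤ G s - M * s ∧ α < s :=
      hmin.and (lt_mem_nhds hr.1)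
    have ht : Tendsto (fun k : ℕ => r - 1 / ((k : ℝ) + 1)) atTop (𝓝 r) := by
      simpa using hlim.const_sub r
    obtain ⟨N, hN⟩ := eventually_atTop.1 (ht.eventually hev)
    refine ⟨fun k => r - 1 / (((k + N : ℕ) : ℝ) + 1), fun _ => r, fun k => ?_, fun k => ?_,
      (tendsto_add_atTop_iff_nat N).2 ht, tendsto_const_nhds⟩
    · have hp : (0 : ℝ) < 1 / (((k + N : ℕ) : ℝ) + 1) := by positivity
      have := hN (k + N) (by omega)
      exact ⟨this.2, by simpa using hp, hr.2, by linarith [this.1]⟩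
    · have hp : (0 : ℝ) < 1 / (((k + N : ℕ) : ℝ) + 1) := by positivity
      exact ⟨by simpa using hp.le, le_rfl⟩
  · have hev : ∀ᶠ s in 𝓝 r, G s - M * s ≤ G r - M * r ∧ s < β :=
      hmax.and (gt_mem_nhds hr.2)
    have ht : Tendsto (fun k : ℕ => r + 1 / ((k : ℝ) + 1)) atTop (𝓝 r) := by
      simpa using hlim.const_add r
    obtain ⟨N, hN⟩ := eventually_atTop.1 (ht.eventually hev)
    refine ⟨fun _ => r, fun k => r + 1 / (((k + N : ℕ) : ℝ) + 1), fun k => ?_, fun k => ?_,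
      tendsto_const_nhds, (tendsto_add_atTop_iff_nat N).2 ht⟩
    · have hp : (0 : ℝ) < 1 / (((k + N : ℕ) : ℝ) + 1) := by positivity
      have := hN (k + N) (by omega)
      exact ⟨hr.1, by simpa using hp, this.2, by linarith [this.1]⟩
    · have hp : (0 : ℝ) < 1 / (((k + N : ℕ) : ℝ) + 1) := by positivity
      exact ⟨le_rfl, by simpa using hp.le⟩

section WeakFormulation

variable {n : ℕ}

lemma isTestFun_mul {Ω L : Set (EuclideanSpace ℝ (Fin n))} {I K : Set ℝ} {η : ℝ → ℝ}
    {ζ : EuclideanSpace ℝ (Fin n) → ℝ} (hη : ContDiff ℝ ∞ η) (hζ : ContDiff ℝ ∞ ζ)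
    (hK : IsCompact K) (hKI : K ⊆ I) (hηK : ∀ t ∉ K, η t = 0)
    (hL : IsCompact L) (hLΩ : L ⊆ Ω) (hζL : ∀ x ∉ L, ζ x = 0) :
    IsTestFun Ω I fun t x => η t * ζ x := by
  have hsupp : Function.support (fun q : ℝ × EuclideanSpace ℝ (Fin n) => η q.1 * ζ q.2)
      ⊆ K ×ˢ L := by
    intro q hq
    refine ⟨?_, ?_⟩ <;> by_contra h
    · exact hq (by simp [hηK _ h])
    · exact hq (by simp [hζL _ h])
  refine ⟨?_, HasCompactSupport.of_support_subset_isCompact (hK.prod hL) hsupp, ?_⟩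
  · exact (hη.comp contDiff_fst).mul (hζ.comp contDiff_snd)
  · exact (closure_minimal hsupp (hK.prod hL).isClosed).trans (prod_mono hKI hLΩ)

/-- Testing the weak formulation with `η(t) ζ(x)`. Only the integrability of `‖F‖` is used. -/
lemma abs_setIntegral_le_of_weak {Ω A : Set (EuclideanSpace ℝ (Fin n))} {Λ : Set ℝ}
    (hA : MeasurableSet A)
    {u : ℝ → EuclideanSpace ℝ (Fin n) → ℝ}
    {F : ℝ → EuclideanSpace ℝ (Fin n) → EuclideanSpace ℝ (Fin n)}
    (hu : IntegrableOn (fun q : ℝ × EuclideanSpace ℝ (Fin n) => u q.1 q.2) (Λ ×ˢ Ω))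
    (hF : IntegrableOn (fun q : ℝ × EuclideanSpace ℝ (Fin n) => ‖F q.1 q.2‖) (Λ ×ˢ Ω))
    (heq : ∀ φ : ℝ → EuclideanSpace ℝ (Fin n) → ℝ, IsTestFun Ω Λ φ →
      ∫ t in Λ, ∫ x in Ω, u t x * deriv (fun s => φ s x) t
        = ∫ t in Λ, ∫ x in Ω, fderiv ℝ (φ t) x (F t x))
    {η η' : ℝ → ℝ} {ζ : EuclideanSpace ℝ (Fin n) → ℝ} {C K : ℝ}
    (hη : ∀ t, HasDerivAt η (η' t) t) (hη1 : ∀ t, |η t| ≤ 1)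
    (hη'c : Continuous η') (hη'C : ∀ t, |η' t| ≤ C)
    (hζ : ContDiff ℝ ∞ ζ) (hζ1 : ∀ x, |ζ x| ≤ 1)
    (hζA : ∀ x, ‖fderiv ℝ ζ x‖ ≤ A.indicator (fun _ => K) x)
    (htest : IsTestFun Ω Λ fun t x => η t * ζ x) :
    |∫ q in Λ ×ˢ Ω, η' q.1 * (ζ q.2 * u q.1 q.2)| ≤
      K * ∫ q in Λ ×ˢ Ω, {q : ℝ × EuclideanSpace ℝ (Fin n) | q.2 ∈ A}.indicator
        (fun q => ‖F q.1 q.2‖) q := by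
  have hA' : MeasurableSet {q : ℝ × EuclideanSpace ℝ (Fin n) | q.2 ∈ A} := measurable_snd hA
  have hint : IntegrableOn (fun q : ℝ × EuclideanSpace ℝ (Fin n) =>
      η' q.1 * (ζ q.2 * u q.1 q.2)) (Λ ×ˢ Ω) := by
    have h1 : IntegrableOn (fun q : ℝ × EuclideanSpace ℝ (Fin n) => ζ q.2 * u q.1 q.2)
        (Λ ×ˢ Ω) :=
      Integrable.bdd_mul (c := 1) hu
        (hζ.continuous.comp continuous_snd).aestronglyMeasurable
        (ae_of_all _ fun q => hζ1 q.2)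
    exact Integrable.bdd_mul (c := C) h1
      (hη'c.comp continuous_fst).aestronglyMeasurable (ae_of_all _ fun q => hη'C q.1)
  set h : ℝ × EuclideanSpace ℝ (Fin n) → ℝ := fun q =>
    K * {q : ℝ × EuclideanSpace ℝ (Fin n) | q.2 ∈ A}.indicator (fun q => ‖F q.1 q.2‖) q
    with hh
  have hhint : IntegrableOn h (Λ ×ˢ Ω) := (Integrable.indicator hF hA').const_mul K
  have hhint' : Integrable h ((volume.restrict Λ).prod (volume.restrict Ω)) := by
    rwa [Measure.prod_restrict]
  rw [← integral_const_mul]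
  change _ ≤ ∫ q in Λ ×ˢ Ω, h q
  rw [Measure.volume_eq_prod, setIntegral_prod _ hint, setIntegral_prod _ hhint]
  have hweak := heq _ htest
  have hleft : ∫ t in Λ, ∫ x in Ω, u t x * deriv (fun s => η s * ζ x) t
      = ∫ t in Λ, ∫ x in Ω, η' t * (ζ x * u t x) := by
    congr 1; ext t; congr 1; ext x
    rw [((hη t).mul_const (ζ x)).deriv]
    ring
  rw [hleft] at hweak
  change |∫ t in Λ, ∫ x in Ω, η' t * (ζ x * u t x)| ≤ _
  rw [hweak, ← Real.norm_eq_abs]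
  refine norm_integral_le_of_norm_le hhint'.integral_prod_left ?_
  filter_upwards [hhint'.prod_right_ae] with t ht
  refine norm_integral_le_of_norm_le ht (ae_of_all _ fun x => ?_)
  have hfd : fderiv ℝ (fun x => η t * ζ x) x = η t • fderiv ℝ ζ x :=
    fderiv_const_mul (hζ.differentiable (by simp) x) (η t)
  rw [hfd, smul_apply, norm_smul]
  calc ‖η t‖ * ‖fderiv ℝ ζ x (F t x)‖ ≤ 1 * (A.indicator (fun _ => K) x * ‖F t x‖) := by
        gcongr
        · exact hη1 t
        · exact ((fderiv ℝ ζ x).le_opNorm _).trans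
            (mul_le_mul_of_nonneg_right (hζA x) (norm_nonneg _))
    _ = h (t, x) := by
        by_cases hx : x ∈ A <;> simp [hh, indicator, hx]

/-- Almost every space-time point avoids a given lateral surface. -/
lemma ae_snd_notMem_sphere (x₀ : EuclideanSpace ℝ (Fin n)) {s : ℝ} (hs : s ≠ 0) :
    ∀ᵐ q : ℝ × EuclideanSpace ℝ (Fin n), q.2 ∉ sphere x₀ s := by
  have h : ∀ᵐ x : EuclideanSpace ℝ (Fin n), x ∉ sphere x₀ s :=
    measure_eq_zero_iff_ae_notMem.1 (Measure.addHaar_sphere_of_ne_zero volume x₀ hs)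
  exact Measure.quasiMeasurePreserving_snd.ae h

/-- The integral of an integrable function over concentric cylinders depends continuously on
the radius. -/
lemma continuousAt_setIntegral_indicator_ball
    {Q : Set (ℝ × EuclideanSpace ℝ (Fin n))} {f : ℝ × EuclideanSpace ℝ (Fin n) → ℝ}
    (hf : IntegrableOn f Q) (x₀ : EuclideanSpace ℝ (Fin n)) {s : ℝ} (hs : 0 < s) :
    ContinuousAt (fun s => ∫ q in Q, {q : ℝ × EuclideanSpace ℝ (Fin n) |
      q.2 ∈ ball x₀ s}.indicator f q) s := by
  refine continuousAt_of_dominated (bound := fun q => ‖f q‖)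
    (Eventually.of_forall fun r => hf.aestronglyMeasurable.indicator
      (measurable_snd measurableSet_ball))
    (Eventually.of_forall fun r => ae_of_all _ fun q => norm_indicator_le_norm_self _ _)
    hf.norm ?_
  filter_upwards [ae_restrict_of_ae (ae_snd_notMem_sphere x₀ hs.ne')] with q hq
  have hd : dist q.2 x₀ ≠ s := hq
  rcases hd.lt_or_gt with h | h
  · refine (continuousAt_const (y := f q)).congr ?_
    filter_upwards [lt_mem_nhds h] with r hr
    rw [indicator_of_mem]
    exact hr
  · refine (continuousAt_const (y := (0 : ℝ))).congr ?_
    filter_upwards [gt_mem_nhds h] with r hr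
    rw [indicator_of_notMem]
    exact fun hmem => lt_asymm hr hmem

/-- There is a radius `r ∈ (ρ/2, ρ)` for which the integrals of `u` over `B_r`, mollified in time,
oscillate by at most `2/ρ` times the integral of `|F|` over the cylinder. -/
lemma exists_radius_forall_bump_le
    (x₀ : EuclideanSpace ℝ (Fin n)) {ρ c d : ℝ} (hρ : 0 < ρ)
    {u : ℝ → EuclideanSpace ℝ (Fin n) → ℝ}
    {F : ℝ → EuclideanSpace ℝ (Fin n) → EuclideanSpace ℝ (Fin n)}
    (hu : IntegrableOn (fun q : ℝ × EuclideanSpace ℝ (Fin n) => u q.1 q.2)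
      (Ioo c d ×ˢ ball x₀ ρ))
    (hF : IntegrableOn (fun q : ℝ × EuclideanSpace ℝ (Fin n) => ‖F q.1 q.2‖)
      (Ioo c d ×ˢ ball x₀ ρ))
    (heq : ∀ φ : ℝ → EuclideanSpace ℝ (Fin n) → ℝ, IsTestFun (ball x₀ ρ) (Ioo c d) φ →
      ∫ t in Ioo c d, ∫ x in ball x₀ ρ, u t x * deriv (fun s => φ s x) t
        = ∫ t in Ioo c d, ∫ x in ball x₀ ρ, fderiv ℝ (φ t) x (F t x)) :
    ∃ r ∈ Ioo (ρ / 2) ρ, ∀ (ψ : ContDiffBump (0 : ℝ)) (t₁ t₂ : ℝ),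
      c < t₁ - ψ.rOut → t₁ + ψ.rOut < d → c < t₂ - ψ.rOut → t₂ + ψ.rOut < d →
      |∫ t in Ioo c d, (ψ.normed volume (t₁ - t) - ψ.normed volume (t₂ - t)) *
          ∫ x in ball x₀ r, u t x| ≤
        2 / ρ * ∫ q in Ioo c d ×ˢ ball x₀ ρ, ‖F q.1 q.2‖ := by
  set Q : Set (ℝ × EuclideanSpace ℝ (Fin n)) := Ioo c d ×ˢ ball x₀ ρ with hQ
  set f : ℝ × EuclideanSpace ℝ (Fin n) → ℝ := fun q => ‖F q.1 q.2‖ with hf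
  set cyl : ℝ → Set (ℝ × EuclideanSpace ℝ (Fin n)) := fun s => {q | q.2 ∈ ball x₀ s} with hcyl
  have hcylm : ∀ s, MeasurableSet (cyl s) := fun s => measurable_snd measurableSet_ball
  have hfi : ∀ s, IntegrableOn ((cyl s).indicator f) Q := fun s =>
    Integrable.indicator hF (hcylm s)
  set G : ℝ → ℝ := fun s => ∫ q in Q, (cyl s).indicator f q with hG
  have hGcont : ContinuousOn G (Icc (ρ / 2) ρ) := fun s hs =>
    (continuousAt_setIntegral_indicator_ball hF x₀
      (lt_of_lt_of_le (half_pos hρ) hs.1)).continuousWithinAt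
  obtain ⟨r, hr, a, b, hab, harb, ha, hb⟩ := exists_slope_le_mean (half_lt_self hρ) hGcont
  refine ⟨r, hr, fun ψ t₁ t₂ h1c h1d h2c h2d => ?_⟩
  have hGρ : G ρ - G (ρ / 2) ≤ ∫ q in Q, f q := by
    have h1 : G ρ ≤ ∫ q in Q, f q := integral_mono (hfi _) hF fun q =>
      indicator_le_self' (fun _ _ => norm_nonneg _) q
    have h2 : 0 ≤ G (ρ / 2) := integral_nonneg fun q =>
      indicator_nonneg (fun _ _ => norm_nonneg _) q
    linarith
  have hmean : (G ρ - G (ρ / 2)) / (ρ - ρ / 2) ≤ 2 / ρ * ∫ q in Q, f q := by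
    calc (G ρ - G (ρ / 2)) / (ρ - ρ / 2) = 2 / ρ * (G ρ - G (ρ / 2)) := by field_simp; ring
      _ ≤ _ := by gcongr
  set M := 2 / ρ * ∫ q in Q, f q with hM
  set κ : ℕ → ℝ := fun k => 1 + 1 / ((k : ℝ) + 1) with hκ
  have hκ1 : ∀ k, 1 < κ k := fun k => by
    have : (0 : ℝ) < 1 / ((k : ℝ) + 1) := by positivity
    simpa [hκ] using this
  have hκlim : Tendsto κ atTop (𝓝 1) := by
    simpa [hκ] using (tendsto_one_div_add_atTop_nhds_zero_nat (𝕜 := ℝ)).const_add 1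
  choose ζ hζc hζI hζa hζb hζd using fun k => exists_radial_cutoff x₀
    ((half_pos hρ).trans (hab k).1) (hab k).2.1 (hκ1 k)
  have hζ1 : ∀ k x, |ζ k x| ≤ 1 := fun k x => by
    rw [abs_of_nonneg (hζI k x).1]; exact (hζI k x).2
  set η : ℝ → ℝ := fun t => bumpStep ψ (t₂ - t) - bumpStep ψ (t₁ - t) with hη
  set η' : ℝ → ℝ := fun t => ψ.normed volume (t₁ - t) - ψ.normed volume (t₂ - t) with hη'
  have hηd : ∀ t, HasDerivAt η (η' t) t := fun t => by
    have h (τ : ℝ) : HasDerivAt (fun t => bumpStep ψ (τ - t)) (-ψ.normed volume (τ - t)) t := by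
      have := (hasDerivAt_bumpStep ψ (τ - t)).comp t ((hasDerivAt_id t).const_sub τ)
      rwa [mul_neg_one] at this
    have := (h t₂).sub (h t₁)
    rwa [neg_sub_neg] at this
  have hη1 : ∀ t, |η t| ≤ 1 := fun t => by
    have h1 := bumpStep_mem_Icc ψ (t₁ - t)
    have h2 := bumpStep_mem_Icc ψ (t₂ - t)
    rw [abs_le]
    constructor <;> simp only [hη] <;> linarith [h1.1, h1.2, h2.1, h2.2]
  have hηs : ContDiff ℝ ∞ η :=
    ((contDiff_bumpStep ψ).comp (contDiff_const.sub contDiff_id)).sub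
      ((contDiff_bumpStep ψ).comp (contDiff_const.sub contDiff_id))
  have hη'c : Continuous η' :=
    (ψ.continuous_normed.comp (continuous_const.sub continuous_id)).sub
      (ψ.continuous_normed.comp (continuous_const.sub continuous_id))
  obtain ⟨C, hC⟩ : ∃ C, ∀ t, |η' t| ≤ C := by
    obtain ⟨B, hB⟩ := ψ.continuous_normed.bounded_above_of_compact_support
      (ψ.hasCompactSupport_normed (μ := volume))
    exact ⟨B + B, fun t => (abs_sub _ _).trans (add_le_add (hB _) (hB _))⟩
  have hη0 : ∀ t ∉ Icc (min t₁ t₂ - ψ.rOut) (max t₁ t₂ + ψ.rOut), η t = 0 := by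
    intro t ht
    rw [mem_Icc, not_and_or, not_le, not_le] at ht
    rcases ht with ht | ht
    · have h1 := min_le_left t₁ t₂
      have h2 := min_le_right t₁ t₂
      simp only [hη]
      rw [bumpStep_eq_one ψ (by linarith), bumpStep_eq_one ψ (by linarith), sub_self]
    · have h1 := le_max_left t₁ t₂
      have h2 := le_max_right t₁ t₂
      simp only [hη]
      rw [bumpStep_eq_zero ψ (by linarith), bumpStep_eq_zero ψ (by linarith), sub_self]
  have hKΛ : Icc (min t₁ t₂ - ψ.rOut) (max t₁ t₂ + ψ.rOut) ⊆ Ioo c d := by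
    refine Icc_subset_Ioo ?_ ?_
    · rcases min_choice t₁ t₂ with h | h <;> rw [h] <;> assumption
    · rcases max_choice t₁ t₂ with h | h <;> rw [h] <;> assumption
  have hbound : ∀ k, |∫ q in Q, η' q.1 * (ζ k q.2 * u q.1 q.2)| ≤ κ k * M := by
    intro k
    have hba : 0 < b k - a k := sub_pos.2 (hab k).2.1
    have htest : IsTestFun (ball x₀ ρ) (Ioo c d) fun t x => η t * ζ k x :=
      isTestFun_mul hηs (hζc k) isCompact_Icc hKΛ hη0 (isCompact_closedBall x₀ (b k))
        (closedBall_subset_ball (hab k).2.2.1) fun x hx =>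
          hζb k x (not_le.1 fun h => hx (mem_closedBall.2 h)).le
    refine (abs_setIntegral_le_of_weak (measurableSet_ball.diff measurableSet_ball) hu hF heq
      hηd hη1 hη'c hC (hζc k) (hζ1 k) (hζd k) htest).trans ?_
    have hdiff : ∫ q in Q, {q : ℝ × EuclideanSpace ℝ (Fin n) |
        q.2 ∈ ball x₀ (b k) \ ball x₀ (a k)}.indicator (fun q => ‖F q.1 q.2‖) q
        = G (b k) - G (a k) := by
      simp only [hG]
      rw [← integral_sub (hfi _) (hfi _)]
      refine integral_congr_ae (ae_of_all _ fun q => ?_)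
      have hsub : cyl (a k) ⊆ cyl (b k) := fun q hq => ball_subset_ball (hab k).2.1.le hq
      exact congrFun (indicator_sdiff hsub f) q
    rw [hdiff]
    calc κ k / (b k - a k) * (G (b k) - G (a k))
        ≤ κ k / (b k - a k) * (M * (b k - a k)) := by
          have := (zero_lt_one.trans (hκ1 k)).le
          gcongr
          exact (hab k).2.2.2.trans (mul_le_mul_of_nonneg_right hmean hba.le)
      _ = κ k * M := by field_simp
  set g : ℝ × EuclideanSpace ℝ (Fin n) → ℝ := fun q =>
    η' q.1 * (ball x₀ r).indicator (u q.1) q.2 with hg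
  have hgi : IntegrableOn g Q := by
    have h1 : IntegrableOn ((cyl r).indicator fun q => u q.1 q.2) Q :=
      Integrable.indicator hu (hcylm r)
    exact Integrable.bdd_mul (c := C) h1
      (hη'c.comp continuous_fst).aestronglyMeasurable (ae_of_all _ fun q => hC q.1)
  have hr0 : 0 < r := (half_pos hρ).trans hr.1
  have hlim : Tendsto (fun k => ∫ q in Q, η' q.1 * (ζ k q.2 * u q.1 q.2)) atTop
      (𝓝 (∫ q in Q, g q)) := by
    refine tendsto_integral_of_dominated_convergence (fun q => C * ‖u q.1 q.2‖)
      (fun k => ?_) (hu.norm.const_mul C) (fun k => ae_of_all _ fun q => ?_) ?_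
    · exact (hη'c.comp continuous_fst).aestronglyMeasurable.mul
        (((hζc k).continuous.comp continuous_snd).aestronglyMeasurable.mul hu.aestronglyMeasurable)
    · rw [norm_mul, norm_mul]
      have hC0 : 0 ≤ C := (abs_nonneg _).trans (hC q.1)
      exact mul_le_mul (hC q.1) (mul_le_of_le_one_left (norm_nonneg _) (hζ1 k q.2))
        (by positivity) hC0
    · filter_upwards [ae_restrict_of_ae (ae_snd_notMem_sphere x₀ hr0.ne')] with q hq
      have hd : dist q.2 x₀ ≠ r := hq
      rcases hd.lt_or_gt with h | h
      · refine tendsto_const_nhds.congr' ?_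
        filter_upwards [ha.eventually (lt_mem_nhds h)] with k hk
        simp only [hg]
        rw [hζa k _ hk.le, one_mul, indicator_of_mem (mem_ball.2 h)]
      · refine tendsto_const_nhds.congr' ?_
        filter_upwards [hb.eventually (gt_mem_nhds h)] with k hk
        simp only [hg]
        rw [hζb k _ hk.le, zero_mul, indicator_of_notMem fun hm => lt_asymm h (mem_ball.1 hm)]
  have hfinal : |∫ q in Q, g q| ≤ M := by
    refine le_of_tendsto_of_tendsto' hlim.abs ?_ hbound
    simpa using hκlim.mul_const M
  have hgeq : ∫ q in Q, g q = ∫ t in Ioo c d, η' t * ∫ x in ball x₀ r, u t x := by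
    rw [hQ, Measure.volume_eq_prod, setIntegral_prod _ hgi]
    congr 1; ext t
    simp only [hg]
    rw [integral_const_mul, setIntegral_indicator measurableSet_ball,
      inter_eq_self_of_subset_right (ball_subset_ball hr.2.le)]
  rwa [hgeq] at hfinal

end WeakFormulation

/-- A bound on differences of mollifications passes to almost all pairs of points. -/
lemma ae_ae_abs_sub_le_of_bump {c d M : ℝ} {U : ℝ → ℝ} (hU : IntegrableOn U (Ioo c d))
    (h : ∀ (ψ : ContDiffBump (0 : ℝ)) (t₁ t₂ : ℝ),
      c < t₁ - ψ.rOut → t₁ + ψ.rOut < d → c < t₂ - ψ.rOut → t₂ + ψ.rOut < d →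
      |∫ t in Ioo c d, (ψ.normed volume (t₁ - t) - ψ.normed volume (t₂ - t)) * U t| ≤ M) :
    ∀ᵐ t₁ ∂(volume.restrict (Ioo c d)), ∀ᵐ t₂ ∂(volume.restrict (Ioo c d)),
      |U t₂ - U t₁| ≤ M := by
  have hδpos : ∀ k : ℕ, (0 : ℝ) < 1 / ((k : ℝ) + 1) := fun k => by positivity
  let ψ : ℕ → ContDiffBump (0 : ℝ) := fun k =>
    ⟨1 / ((k : ℝ) + 1) / 2, 1 / ((k : ℝ) + 1), half_pos (hδpos k), half_lt_self (hδpos k)⟩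
  have hψ : Tendsto (fun k => (ψ k).rOut) atTop (𝓝 0) :=
    tendsto_one_div_add_atTop_nhds_zero_nat
  have hUi : Integrable ((Ioo c d).indicator U) := hU.integrable_indicator measurableSet_Ioo
  have hint : ∀ k τ, IntegrableOn (fun t => (ψ k).normed volume (τ - t) * U t) (Ioo c d) := by
    intro k τ
    obtain ⟨B, hB⟩ := (ψ k).continuous_normed.bounded_above_of_compact_support
      ((ψ k).hasCompactSupport_normed (μ := volume))
    exact Integrable.bdd_mul (c := B) hU
      ((ψ k).continuous_normed.comp (continuous_const.sub continuous_id)).aestronglyMeasurable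
      (ae_of_all _ fun t => hB _)
  have hconv := ContDiffBump.ae_convolution_tendsto_right_of_locallyIntegrable
    (μ := volume) (K := 2) hψ
    (Eventually.of_forall fun k => le_of_eq (by
      change 1 / ((k : ℝ) + 1) = 2 * (1 / ((k : ℝ) + 1) / 2); ring)) hUi.locallyIntegrable
  have hmain : ∀ᵐ τ ∂(volume.restrict (Ioo c d)),
      Tendsto (fun k => ∫ t in Ioo c d, (ψ k).normed volume (τ - t) * U t) atTop (𝓝 (U τ)) ∧
      ∀ᶠ k in atTop, c < τ - (ψ k).rOut ∧ τ + (ψ k).rOut < d := by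
    filter_upwards [ae_restrict_of_ae hconv, ae_restrict_mem measurableSet_Ioo] with τ hτ hmem
    constructor
    · rw [indicator_of_mem hmem] at hτ
      refine hτ.congr fun k => ?_
      rw [convolution_lsmul_swap, ← integral_indicator measurableSet_Ioo]
      congr 1; ext t
      by_cases ht : t ∈ Ioo c d <;> simp [ht]
    · have h1 : Tendsto (fun k => τ - (ψ k).rOut) atTop (𝓝 τ) := by simpa using hψ.const_sub τ
      have h2 : Tendsto (fun k => τ + (ψ k).rOut) atTop (𝓝 τ) := by simpa using hψ.const_add τ
      exact (h1.eventually (lt_mem_nhds hmem.1)).and (h2.eventually (gt_mem_nhds hmem.2))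
  filter_upwards [hmain] with t₁ h₁
  filter_upwards [hmain] with t₂ h₂
  rw [abs_sub_comm]
  refine le_of_tendsto (h₁.1.sub h₂.1).abs ?_
  filter_upwards [h₁.2, h₂.2] with k hk₁ hk₂
  rw [← integral_sub (hint k t₁) (hint k t₂)]
  simpa only [sub_mul] using h (ψ k) t₁ t₂ hk₁.1 hk₁.2 hk₂.1 hk₂.2

/-- Gluing lemma: if `∂_t u = div F` distributionally in the parabolic cylinder
`Q_ρ(z₀) = B_ρ(x₀) × (t₀-ρ^p, t₀+ρ^p)` with `u, F ∈ L¹(Q_ρ(z₀))`, then there is a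
radius `ρh ∈ (ρ/2, ρ)` such that for a.e. `t₁, t₂` the spatial means over `B_ρh(x₀)`
satisfy `|(u)_{x₀,ρh}(t₂) − (u)_{x₀,ρh}(t₁)| ≤ 2^{n+2} ρ^{p-1} ⨍⨍_{Q_ρ(z₀)} |F|`. -/
theorem gluing_lemma (n : ℕ) (hn : 1 ≤ n) (p : ℝ) (hp : 1 < p)
    (x₀ : EuclideanSpace ℝ (Fin n)) (t₀ ρ : ℝ) (hρ : 0 < ρ)
    (Λ : Set ℝ) (hΛ : Λ = Ioo (t₀ - ρ ^ p) (t₀ + ρ ^ p))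
    (Q : Set (ℝ × EuclideanSpace ℝ (Fin n))) (hQ : Q = Λ ×ˢ ball x₀ ρ)
    (u : ℝ → EuclideanSpace ℝ (Fin n) → ℝ)
    (F : ℝ → EuclideanSpace ℝ (Fin n) → EuclideanSpace ℝ (Fin n))
    (hu : IntegrableOn (fun q : ℝ × EuclideanSpace ℝ (Fin n) => u q.1 q.2) Q)
    (hF : IntegrableOn (fun q : ℝ × EuclideanSpace ℝ (Fin n) => ‖F q.1 q.2‖) Q)
    (heq : ∀ φ : ℝ → EuclideanSpace ℝ (Fin n) → ℝ, IsTestFun (ball x₀ ρ) Λ φ →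
      ∫ t in Λ, ∫ x in ball x₀ ρ, u t x * deriv (fun s => φ s x) t
        = ∫ t in Λ, ∫ x in ball x₀ ρ, fderiv ℝ (φ t) x (F t x)) :
    ∃ ρh ∈ Ioo (ρ / 2) ρ,
      ∀ᵐ t₁ ∂(volume.restrict Λ), ∀ᵐ t₂ ∂(volume.restrict Λ),
        |(volume (ball x₀ ρh)).toReal⁻¹ * (∫ x in ball x₀ ρh, u t₂ x)
          - (volume (ball x₀ ρh)).toReal⁻¹ * (∫ x in ball x₀ ρh, u t₁ x)|
          ≤ 2 ^ (n + 2) * ρ ^ (p - 1) *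
              ((volume Q).toReal⁻¹ * ∫ q in Q, ‖F q.1 q.2‖) := by
  subst hΛ hQ
  obtain ⟨r, hr, hbump⟩ := exists_radius_forall_bump_le x₀ hρ hu hF heq
  refine ⟨r, hr, ?_⟩
  have hr0 : 0 < r := (half_pos hρ).trans hr.1
  have hU : IntegrableOn (fun t => ∫ x in ball x₀ r, u t x)
      (Ioo (t₀ - ρ ^ p) (t₀ + ρ ^ p)) := by
    have h1 := hu.mono_set (prod_mono (le_refl (Ioo (t₀ - ρ ^ p) (t₀ + ρ ^ p)))
      (ball_subset_ball (x := x₀) hr.2.le))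
    rw [IntegrableOn, Measure.volume_eq_prod, ← Measure.prod_restrict] at h1
    exact h1.integral_prod_left
  set I := ∫ q in Ioo (t₀ - ρ ^ p) (t₀ + ρ ^ p) ×ˢ ball x₀ ρ, ‖F q.1 q.2‖ with hI
  have hI0 : 0 ≤ I := integral_nonneg fun _ => norm_nonneg _
  set V := (volume (ball (0 : EuclideanSpace ℝ (Fin n)) 1)).toReal with hV
  have hV0 : 0 < V :=
    ENNReal.toReal_pos (measure_ball_pos _ _ one_pos).ne' measure_ball_lt_top.ne
  have hball : ∀ s, 0 < s → (volume (ball x₀ s)).toReal = s ^ n * V := by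
    intro s hs
    rw [Measure.addHaar_ball_of_pos _ _ hs, ENNReal.toReal_mul,
      ENNReal.toReal_ofReal (by positivity), finrank_euclideanSpace_fin]
  have hρp : 0 < ρ ^ p := Real.rpow_pos_of_pos hρ p
  have hQ : (volume (Ioo (t₀ - ρ ^ p) (t₀ + ρ ^ p) ×ˢ ball x₀ ρ)).toReal
      = 2 * ρ ^ p * (ρ ^ n * V) := by
    rw [Measure.volume_eq_prod, Measure.prod_prod, ENNReal.toReal_mul, hball ρ hρ,
      Real.volume_Ioo, ENNReal.toReal_ofReal (by linarith)]
    ring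
  filter_upwards [ae_ae_abs_sub_le_of_bump hU hbump] with t₁ h₁
  filter_upwards [h₁] with t₂ h₂
  rw [← mul_sub, abs_mul, abs_of_nonneg (by positivity), hball r hr0, hQ,
    Real.rpow_sub_one hρ.ne']
  calc (r ^ n * V)⁻¹ * |(∫ x in ball x₀ r, u t₂ x) - ∫ x in ball x₀ r, u t₁ x|
      ≤ ((ρ / 2) ^ n * V)⁻¹ * (2 / ρ * I) := by
        gcongr
        exact hr.1.le
    _ = 2 ^ (n + 2) * (ρ ^ p / ρ) * ((2 * ρ ^ p * (ρ ^ n * V))⁻¹ * I) := by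
        rw [div_pow]
        field_simp
        ring
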